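/- Let θ be an irrational real number and g = [[a,b],[c,d]] ∈ SL(2,ℤ) (so ad − bc = 1) with c ≥ 1; note cθ + d ≠ 0. Define linear operators on the space of functions f : ℝ × ℤ/cℤ → ℂ by: (U₁ f)(x, α) = f(x − (d + cθ)/c, α − 1); (U₂ f)(x, α) = exp(2πi(x − ᾱd/c)) f(x, α); (V₁ f)(x, α) = f(x − 1/c, α − a); (V₂ f)(x, α) = exp(2πi(x/(cθ + d) − ᾱ/c)) f(x, α); where ᾱ ∈ ℤ is any lift of α ∈ ℤ/cℤ (the exponential factors are independent of the choice of lift). Then: (1) each of V₁, V₂ commutes with each of U₁, U₂, i.e. V₁∘U₁ = U₁∘V₁, V₁∘U₂ = U₂∘V₁, V₂∘U₁ = U₁∘V₂, V₂∘U₂ = U₂∘V₂; and (2) V₁ ∘ V₂ = e^{2πi(aθ+b)/(cθ+d)} · (V₂ ∘ V₁). -/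

import Mathlib

/-- Right action operator `U₁` on `E_g(θ)`: `(U₁ f)(x, α) = f(x - (d + cθ)/c, α - 1)`. -/
noncomputable def basicU₁ (θ : ℝ) (c : ℕ) (d : ℤ)
    (f : ℝ × ZMod c → ℂ) : ℝ × ZMod c → ℂ :=
  fun p => f (p.1 - ((d : ℝ) + (c : ℝ) * θ) / (c : ℝ), p.2 - 1)

/-- Right action operator `U₂` on `E_g(θ)`: `(U₂ f)(x, α) = exp(2πi(x - ᾱd/c)) f(x, α)`,
with the lift `ᾱ = α.val`. -/
noncomputable def basicU₂ (c : ℕ) (d : ℤ)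
    (f : ℝ × ZMod c → ℂ) : ℝ × ZMod c → ℂ :=
  fun p => Complex.exp (2 * Real.pi * Complex.I *
    ((p.1 : ℂ) - ((p.2.val : ℂ) * (d : ℂ)) / (c : ℂ))) * f p

/-- Endomorphism generator `V₁`: `(V₁ f)(x, α) = f(x - 1/c, α - a)`. -/
noncomputable def basicV₁ (c : ℕ) (a : ℤ)
    (f : ℝ × ZMod c → ℂ) : ℝ × ZMod c → ℂ :=
  fun p => f (p.1 - 1 / (c : ℝ), p.2 - (a : ZMod c))

/-- Endomorphism generator `V₂`: `(V₂ f)(x, α) = exp(2πi(x/(cθ+d) - ᾱ/c)) f(x, α)`,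
with the lift `ᾱ = α.val`. -/
noncomputable def basicV₂ (θ : ℝ) (c : ℕ) (d : ℤ)
    (f : ℝ × ZMod c → ℂ) : ℝ × ZMod c → ℂ :=
  fun p => Complex.exp (2 * Real.pi * Complex.I *
    (((p.1 / ((c : ℝ) * θ + d) : ℝ) : ℂ) - (p.2.val : ℂ) / (c : ℂ))) * f p

/-!
`U₁` and `V₁` are translations on the abelian group `ℝ × ℤ/cℤ`, by `((d + cθ)/c, 1)` and
`(1/c, a)`; `U₂` and `V₂` are multiplications by characters of it. Translations commute with each
other, as do multiplications, and moving the translation by `h` past multiplication by the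
character `χ` produces the scalar `χ (-h)`. So the relations come down to three character values:
`e((ad - 1)/c) = e(b) = 1`, `e(1/c - 1/c) = 1`, and
`e(a/c - 1/(c(cθ + d))) = e((aθ + b)/(cθ + d))`, where `e(t) = exp(2πit)`.
-/

open scoped translate

theorem translate_addChar_mul {G M : Type*} [AddCommGroup G] [Monoid M] (χ : AddChar G M) (h : G)
    (f : G → M) : τ h (⇑χ * f) = χ (-h) • (⇑χ * τ h f) := by
  ext p
  simp only [translate_apply, Pi.mul_apply, Pi.smul_apply, smul_eq_mul, sub_eq_neg_add,
    AddChar.map_add_eq_mul, mul_assoc]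

theorem translate_addChar_mul_of_eq_one {G M : Type*} [AddCommGroup G] [Monoid M]
    {χ : AddChar G M} {h : G} (hχ : χ (-h) = 1) (f : G → M) : τ h (⇑χ * f) = ⇑χ * τ h f := by
  rw [translate_addChar_mul, hχ, one_smul]

section

variable {c : ℕ}

/-- The character `(x, α) ↦ exp(2πi(sx + mα/c))` of `ℝ × ℤ/cℤ` with frequency `(s, m)`. It is built
from `ZMod.stdAddChar`, so that no lift of `m` or `α` to `ℤ` is chosen. -/
noncomputable def realZModChar [NeZero c] (s : ℝ) (m : ZMod c) : AddChar (ℝ × ZMod c) ℂ :=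
  (Circle.coeHom.compAddChar (Real.fourierChar.mulShift s)).compAddMonoidHom
      (AddMonoidHom.fst ℝ (ZMod c)) *
    (ZMod.stdAddChar.mulShift m).compAddMonoidHom (AddMonoidHom.snd ℝ (ZMod c))

theorem realZModChar_intCast [NeZero c] (s x : ℝ) (m k : ℤ) :
    realZModChar s (m : ZMod c) (x, (k : ZMod c)) =
      Complex.exp (2 * Real.pi * Complex.I * (s * x + m * k / c)) := by
  have fourier_factor : ((Real.fourierChar (s * x) : Circle) : ℂ) =
      Complex.exp (2 * Real.pi * Complex.I * (s * x)) := by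
    rw [Real.fourierChar_apply]
    push_cast
    ring_nf
  have zmod_factor : ZMod.stdAddChar ((m : ZMod c) * (k : ZMod c)) =
      Complex.exp (2 * Real.pi * Complex.I * (m * k / c)) := by
    rw [← Int.cast_mul, ZMod.stdAddChar_coe]
    push_cast
    ring_nf
  calc realZModChar s (m : ZMod c) (x, (k : ZMod c))
      = (Real.fourierChar (s * x) : Circle) * ZMod.stdAddChar ((m : ZMod c) * (k : ZMod c)) := rfl
    _ = Complex.exp (2 * Real.pi * Complex.I * (s * x + m * k / c)) := by
      rw [fourier_factor, zmod_factor, ← Complex.exp_add, mul_add]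

theorem realZModChar_apply [NeZero c] (s x : ℝ) (m : ℤ) (α : ZMod c) :
    realZModChar s (m : ZMod c) (x, α) =
      Complex.exp (2 * Real.pi * Complex.I * (s * x + m * α.val / c)) := by
  have at_lift := realZModChar_intCast (c := c) s x m α.val
  rwa [Int.cast_natCast, ZMod.natCast_zmod_val, Int.cast_natCast] at at_lift

/-- The element of `ℝ × ℤ/cℤ` by which `U₁` translates. The second coordinate is an integer cast
so that `realZModChar_intCast` applies to it. -/
noncomputable def basicU₁Shift (θ : ℝ) (c : ℕ) (d : ℤ) : ℝ × ZMod c :=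
  ((d + c * θ) / c, ((1 : ℤ) : ZMod c))

/-- The element of `ℝ × ℤ/cℤ` by which `V₁` translates. -/
noncomputable def basicV₁Shift (c : ℕ) (a : ℤ) : ℝ × ZMod c :=
  (1 / c, (a : ZMod c))

/-- The character of `ℝ × ℤ/cℤ` by which `U₂` multiplies. -/
noncomputable def basicU₂Char (c : ℕ) [NeZero c] (d : ℤ) : AddChar (ℝ × ZMod c) ℂ :=
  realZModChar 1 ((-d : ℤ) : ZMod c)

/-- The character of `ℝ × ℤ/cℤ` by which `V₂` multiplies. -/
noncomputable def basicV₂Char (θ : ℝ) (c : ℕ) [NeZero c] (d : ℤ) : AddChar (ℝ × ZMod c) ℂ :=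
  realZModChar (c * θ + d)⁻¹ ((-1 : ℤ) : ZMod c)

theorem basicU₁_eq_translate (θ : ℝ) (d : ℤ) (f : ℝ × ZMod c → ℂ) :
    basicU₁ θ c d f = τ (basicU₁Shift θ c d) f := by
  ext p
  simp only [basicU₁, basicU₁Shift, translate_apply, Prod.sub_def, Int.cast_one]

theorem basicV₁_eq_translate (a : ℤ) (f : ℝ × ZMod c → ℂ) :
    basicV₁ c a f = τ (basicV₁Shift c a) f := rfl

theorem basicU₂_eq_addChar_mul [NeZero c] (d : ℤ) (f : ℝ × ZMod c → ℂ) :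
    basicU₂ c d f = ⇑(basicU₂Char c d) * f := by
  ext ⟨x, α⟩
  rw [Pi.mul_apply, basicU₂Char, realZModChar_apply, basicU₂]
  push_cast
  ring_nf

theorem basicV₂_eq_addChar_mul [NeZero c] (θ : ℝ) (d : ℤ) (f : ℝ × ZMod c → ℂ) :
    basicV₂ θ c d f = ⇑(basicV₂Char θ c d) * f := by
  ext ⟨x, α⟩
  rw [Pi.mul_apply, basicV₂Char, realZModChar_apply, basicV₂]
  push_cast
  ring_nf

theorem basicU₂Char_neg_basicV₁Shift [NeZero c] {a b d : ℤ}
    (hdet : a * d - b * (c : ℤ) = 1) : basicU₂Char c d (-basicV₁Shift c a) = 1 := by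
  have hc : (c : ℂ) ≠ 0 := NeZero.ne _
  have hdet' : (a : ℂ) * d - b * c = 1 := mod_cast hdet
  rw [basicU₂Char, basicV₁Shift, Prod.neg_mk, ← Int.cast_neg, realZModChar_intCast,
    Complex.exp_eq_one_iff]
  refine ⟨b, ?_⟩
  push_cast
  field_simp
  linear_combination hdet'

theorem basicV₂Char_neg_basicU₁Shift [NeZero c] {θ : ℝ} {d : ℤ} (hθ : (c : ℝ) * θ + d ≠ 0) :
    basicV₂Char θ c d (-basicU₁Shift θ c d) = 1 := by
  have hc : (c : ℂ) ≠ 0 := NeZero.ne _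
  have hθ' : (c : ℂ) * θ + d ≠ 0 := mod_cast hθ
  rw [basicV₂Char, basicU₁Shift, Prod.neg_mk, ← Int.cast_neg, realZModChar_intCast,
    Complex.exp_eq_one_iff]
  refine ⟨0, ?_⟩
  push_cast
  field_simp
  ring

theorem basicV₂Char_neg_basicV₁Shift [NeZero c] {θ : ℝ} {a b d : ℤ}
    (hθ : (c : ℝ) * θ + d ≠ 0) (hdet : a * d - b * (c : ℤ) = 1) :
    basicV₂Char θ c d (-basicV₁Shift c a) =
      Complex.exp (2 * Real.pi * Complex.I * (((a * θ + b) / (c * θ + d) : ℝ) : ℂ)) := by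
  have hc : (c : ℂ) ≠ 0 := NeZero.ne _
  have hθ' : (c : ℂ) * θ + d ≠ 0 := mod_cast hθ
  have hdet' : (a : ℂ) * d - b * c = 1 := mod_cast hdet
  rw [basicV₂Char, basicV₁Shift, Prod.neg_mk, ← Int.cast_neg, realZModChar_intCast]
  congr 2
  push_cast
  field_simp
  linear_combination hdet'

theorem basicV₁_basicU₁ (θ : ℝ) (a d : ℤ) (f : ℝ × ZMod c → ℂ) :
    basicV₁ c a (basicU₁ θ c d f) = basicU₁ θ c d (basicV₁ c a f) := by
  simp only [basicV₁_eq_translate, basicU₁_eq_translate]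
  exact translate_comm _ _ f

theorem basicV₁_basicU₂ [NeZero c] {a b d : ℤ} (hdet : a * d - b * (c : ℤ) = 1)
    (f : ℝ × ZMod c → ℂ) :
    basicV₁ c a (basicU₂ c d f) = basicU₂ c d (basicV₁ c a f) := by
  simp only [basicV₁_eq_translate, basicU₂_eq_addChar_mul]
  exact translate_addChar_mul_of_eq_one (basicU₂Char_neg_basicV₁Shift hdet) f

theorem basicV₂_basicU₁ [NeZero c] {θ : ℝ} {d : ℤ} (hθ : (c : ℝ) * θ + d ≠ 0)
    (f : ℝ × ZMod c → ℂ) :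
    basicV₂ θ c d (basicU₁ θ c d f) = basicU₁ θ c d (basicV₂ θ c d f) := by
  simp only [basicU₁_eq_translate, basicV₂_eq_addChar_mul]
  exact (translate_addChar_mul_of_eq_one (basicV₂Char_neg_basicU₁Shift hθ) f).symm

theorem basicV₂_basicU₂ (θ : ℝ) (d : ℤ) (f : ℝ × ZMod c → ℂ) :
    basicV₂ θ c d (basicU₂ c d f) = basicU₂ c d (basicV₂ θ c d f) :=
  funext fun _ => mul_left_comm _ _ _

theorem basicV₁_basicV₂ [NeZero c] {θ : ℝ} {a b d : ℤ} (hθ : (c : ℝ) * θ + d ≠ 0)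
    (hdet : a * d - b * (c : ℤ) = 1) (f : ℝ × ZMod c → ℂ) :
    basicV₁ c a (basicV₂ θ c d f) =
      Complex.exp (2 * Real.pi * Complex.I * (((a * θ + b) / (c * θ + d) : ℝ) : ℂ)) •
        basicV₂ θ c d (basicV₁ c a f) := by
  simp only [basicV₁_eq_translate, basicV₂_eq_addChar_mul]
  rw [translate_addChar_mul, basicV₂Char_neg_basicV₁Shift hθ hdet]

end

theorem basic_module_bimodule_relations_general (θ : ℝ) (a b : ℤ) (c : ℕ) [NeZero c] (d : ℤ)
    (hθ : (c : ℝ) * θ + d ≠ 0) (hdet : a * d - b * (c : ℤ) = 1) :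
    (∀ (f : ℝ × ZMod c → ℂ) (x : ℝ) (α : ZMod c),
      basicV₁ c a (basicU₁ θ c d f) (x, α) = basicU₁ θ c d (basicV₁ c a f) (x, α)) ∧
    (∀ (f : ℝ × ZMod c → ℂ) (x : ℝ) (α : ZMod c),
      basicV₁ c a (basicU₂ c d f) (x, α) = basicU₂ c d (basicV₁ c a f) (x, α)) ∧
    (∀ (f : ℝ × ZMod c → ℂ) (x : ℝ) (α : ZMod c),
      basicV₂ θ c d (basicU₁ θ c d f) (x, α) = basicU₁ θ c d (basicV₂ θ c d f) (x, α)) ∧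
    (∀ (f : ℝ × ZMod c → ℂ) (x : ℝ) (α : ZMod c),
      basicV₂ θ c d (basicU₂ c d f) (x, α) = basicU₂ c d (basicV₂ θ c d f) (x, α)) ∧
    (∀ (f : ℝ × ZMod c → ℂ) (x : ℝ) (α : ZMod c),
      basicV₁ c a (basicV₂ θ c d f) (x, α)
        = Complex.exp (2 * Real.pi * Complex.I *
            ((((a : ℝ) * θ + b) / ((c : ℝ) * θ + d) : ℝ) : ℂ)) *
          basicV₂ θ c d (basicV₁ c a f) (x, α)) :=
  ⟨fun f _ _ => congrFun (basicV₁_basicU₁ θ a d f) _,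
    fun f _ _ => congrFun (basicV₁_basicU₂ hdet f) _,
    fun f _ _ => congrFun (basicV₂_basicU₁ hθ f) _,
    fun f _ _ => congrFun (basicV₂_basicU₂ θ d f) _,
    fun f _ _ => congrFun (basicV₁_basicV₂ hθ hdet f) _⟩

/-- **Polishchuk's bimodule relations for the basic module `E_g(θ)`** with
`g = [[a,b],[c,d]] ∈ SL(2,ℤ)`, `c ≥ 1`, `θ` irrational: the operators `V₁, V₂` commute with
the right-action operators `U₁, U₂`, and satisfy `V₁ ∘ V₂ = e^{2πi(aθ+b)/(cθ+d)} (V₂ ∘ V₁)`,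
the defining relation of the noncommutative torus `A_{gθ}`. -/
theorem basic_module_bimodule_relations (θ : ℝ) (hθ : Irrational θ)
    (a b : ℤ) (c : ℕ) (d : ℤ) (hc : 1 ≤ c) (hdet : a * d - b * (c : ℤ) = 1) :
    (∀ (f : ℝ × ZMod c → ℂ) (x : ℝ) (α : ZMod c),
      basicV₁ c a (basicU₁ θ c d f) (x, α) = basicU₁ θ c d (basicV₁ c a f) (x, α)) ∧
    (∀ (f : ℝ × ZMod c → ℂ) (x : ℝ) (α : ZMod c),
      basicV₁ c a (basicU₂ c d f) (x, α) = basicU₂ c d (basicV₁ c a f) (x, α)) ∧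
    (∀ (f : ℝ × ZMod c → ℂ) (x : ℝ) (α : ZMod c),
      basicV₂ θ c d (basicU₁ θ c d f) (x, α) = basicU₁ θ c d (basicV₂ θ c d f) (x, α)) ∧
    (∀ (f : ℝ × ZMod c → ℂ) (x : ℝ) (α : ZMod c),
      basicV₂ θ c d (basicU₂ c d f) (x, α) = basicU₂ c d (basicV₂ θ c d f) (x, α)) ∧
    (∀ (f : ℝ × ZMod c → ℂ) (x : ℝ) (α : ZMod c),
      basicV₁ c a (basicV₂ θ c d f) (x, α)
        = Complex.exp (2 * Real.pi * Complex.I *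
            ((((a : ℝ) * θ + b) / ((c : ℝ) * θ + d) : ℝ) : ℂ)) *
          basicV₂ θ c d (basicV₁ c a f) (x, α)) := by
  have : NeZero c := ⟨Nat.one_le_iff_ne_zero.mp hc⟩
  exact basic_module_bimodule_relations_general θ a b c d
    ((hθ.natCast_mul (NeZero.ne c)).add_intCast d).ne_zero hdet
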